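/- arXiv:1808.04791 — 2 statements merged into one kernel-verified Lean document; each statement's English description precedes it below -/
import Mathlib

section
/- For every α : Fin χ, the first response of the second cumulant with all indices equal to α is fully specified by the second response coefficient with indices α: D[(α, α); (α)] f = D[(α); (α, α)] g − 2 · D[(α); (α, α)] f; that is, Q_{αα,α}(B) = Q_{α,αα}(−B) − 2 Q_{α,αα}(B). -/
/-- Partial derivative of `F (λ, A)` with respect to the counting parameter `λ_i`. -/
noncomputable def pderivLam {χ : ℕ} (i : Fin χ)
    (F : (Fin χ → ℝ) → (Fin χ → ℝ) → ℝ) : (Fin χ → ℝ) → (Fin χ → ℝ) → ℝ :=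
  fun l a => fderiv ℝ (fun l' => F l' a) l (Pi.single i 1)

/-- Partial derivative of `F (λ, A)` with respect to the affinity `A_i`. -/
noncomputable def pderivAff {χ : ℕ} (i : Fin χ)
    (F : (Fin χ → ℝ) → (Fin χ → ℝ) → ℝ) : (Fin χ → ℝ) → (Fin χ → ℝ) → ℝ :=
  fun l a => fderiv ℝ (fun a' => F l a') a (Pi.single i 1)

/-- Mixed partial derivative `D[α; β] F`: derivatives with respect to the counting
parameters `λ_{α₁}, …, λ_{α_m}` and the affinities `A_{β₁}, …, A_{β_n}`, evaluated at
`(λ, A) = (0, 0)`. -/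
noncomputable def Dmix {χ : ℕ} (α β : List (Fin χ))
    (F : (Fin χ → ℝ) → (Fin χ → ℝ) → ℝ) : ℝ :=
  (List.foldr pderivLam (List.foldr pderivAff F β) α) 0 0

/-- Directional derivative. -/
noncomputable def dirD {E : Type*} [NormedAddCommGroup E] [NormedSpace ℝ E] (w : E) (F : E → ℝ) :
    E → ℝ := fun p => fderiv ℝ F p w

section helpers
variable {E : Type*} [NormedAddCommGroup E] [NormedSpace ℝ E]

theorem dirD_smooth (w : E) {F : E → ℝ} (hF : ContDiff ℝ (⊤ : ℕ∞) F) :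
    ContDiff ℝ (⊤ : ℕ∞) (dirD w F) :=
  (hF.fderiv_right (m := ((⊤ : ℕ∞) : WithTop ℕ∞)) (by simp)).clm_apply contDiff_const

theorem smooth_diff {F : E → ℝ} (hF : ContDiff ℝ (⊤ : ℕ∞) F) : Differentiable ℝ F :=
  hF.differentiable (by simp)

theorem dirD_add_dir (w w' : E) (F : E → ℝ) : dirD (w + w') F = dirD w F + dirD w' F := by
  ext p; simp [dirD]

theorem dirD_neg_dir (w : E) (F : E → ℝ) : dirD (-w) F = - dirD w F := by
  ext p; simp [dirD]

theorem dirD_neg (w : E) (F : E → ℝ) : dirD w (-F) = - dirD w F := by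
  ext p; simp [dirD, fderiv_neg]

theorem dirD_zero (w : E) : dirD w (0 : E → ℝ) = 0 := by
  ext p; simp [dirD]

theorem dirD_add (w : E) {F G : E → ℝ} (hF : ContDiff ℝ (⊤ : ℕ∞) F)
    (hG : ContDiff ℝ (⊤ : ℕ∞) G) : dirD w (F + G) = dirD w F + dirD w G := by
  ext p; simp [dirD, fderiv_add (smooth_diff hF p) (smooth_diff hG p)]

theorem dirD_comm (w w' : E) {F : E → ℝ} (hF : ContDiff ℝ (⊤ : ℕ∞) F) :
    dirD w (dirD w' F) = dirD w' (dirD w F) := by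
  ext p
  have hd : DifferentiableAt ℝ (fderiv ℝ F) p :=
    ((hF.fderiv_right (m := ((⊤ : ℕ∞) : WithTop ℕ∞)) (by simp)).differentiable (by simp)) p
  have key : ∀ a b : E, dirD a (dirD b F) p = fderiv ℝ (fderiv ℝ F) p a b := by
    intro a b
    unfold dirD
    rw [fderiv_clm_apply hd (differentiableAt_const b)]
    simp
  rw [key, key]
  exact (hF.contDiffAt.isSymmSndFDerivAt (by
    simp only [minSmoothness_of_isRCLikeNormedField]
    exact WithTop.coe_le_coe.2 le_top)).eq w w'

theorem dirD_comp (L : E →L[ℝ] E) (w : E) {F : E → ℝ} (hF : ContDiff ℝ (⊤ : ℕ∞) F) :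
    dirD w (F ∘ L) = dirD (L w) F ∘ L := by
  ext p
  simp only [dirD, Function.comp_apply]
  rw [fderiv_comp p (smooth_diff hF _) L.differentiableAt]
  simp

theorem dirD_comp3 (L : E →L[ℝ] E) (a b c : E) {F : E → ℝ} (hF : ContDiff ℝ (⊤ : ℕ∞) F) :
    dirD a (dirD b (dirD c (F ∘ L))) = dirD (L a) (dirD (L b) (dirD (L c) F)) ∘ L := by
  rw [dirD_comp L c hF, dirD_comp L b (dirD_smooth _ hF),
    dirD_comp L a (dirD_smooth _ (dirD_smooth _ hF))]

theorem final_algebra (u v : E) {G : E → ℝ} (hg : ContDiff ℝ (⊤ : ℕ∞) G)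
    (eM : 0 = dirD (u + v) (dirD (u + v) (dirD (u + v) G)) 0)
    (eN : 0 = dirD v (dirD v (dirD v G)) 0) :
    dirD (-u) (dirD (-u) (dirD (u + v) G)) 0 = dirD u (dirD v (dirD v G)) 0
      - 2 * dirD (-u) (dirD (u + v) (dirD (u + v) G)) 0 := by
  have s := fun w => dirD_smooth w hg
  have s2 := fun w w' => dirD_smooth w (s w')
  have c1 := dirD_comm v u hg
  have c2 := dirD_comm v u (s u)
  have c3 := dirD_comm v u (s v)
  have a1 : ∀ w a b, dirD w (dirD a G + dirD b G) = dirD w (dirD a G) + dirD w (dirD b G) :=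
    fun w a b => dirD_add w (s a) (s b)
  have a2 : ∀ w a b c d, dirD w (dirD a (dirD b G) + dirD c (dirD d G))
      = dirD w (dirD a (dirD b G)) + dirD w (dirD c (dirD d G)) :=
    fun w a b c d => dirD_add w (s2 a b) (s2 c d)
  have a3 : ∀ w a b c d a' b' c' d', dirD w (dirD a (dirD b G) + dirD c (dirD d G)
        + (dirD a' (dirD b' G) + dirD c' (dirD d' G)))
      = dirD w (dirD a (dirD b G)  + dirD c (dirD d G))
        + dirD w (dirD a' (dirD b' G)  + dirD c' (dirD d' G)) :=
    fun w a b c d a' b' c' d' =>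
      dirD_add w ((s2 a b).add (s2 c d)) ((s2 a' b').add (s2 c' d'))
  simp only [dirD_add_dir, dirD_neg_dir, dirD_neg, a1, a2, a3, ← neg_add,
    c1, c2, c3, Pi.add_apply, Pi.neg_apply] at eM eN ⊢
  linarith

end helpers

theorem uncurry_pderivLam {χ : ℕ} (i : Fin χ) {F : (Fin χ → ℝ) → (Fin χ → ℝ) → ℝ}
    (hF : ContDiff ℝ (⊤ : ℕ∞) (Function.uncurry F)) :
    Function.uncurry (pderivLam i F) = dirD (Pi.single i 1, 0) (Function.uncurry F) := by
  ext ⟨l, a⟩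
  have h := ((smooth_diff hF (l, a)).hasFDerivAt).comp l (hasFDerivAt_prodMk_left (𝕜 := ℝ) l a)
  have h2 : fderiv ℝ (fun l' => F l' a) l = _ := h.fderiv
  simp [pderivLam, dirD, h2]

theorem uncurry_pderivAff {χ : ℕ} (i : Fin χ) {F : (Fin χ → ℝ) → (Fin χ → ℝ) → ℝ}
    (hF : ContDiff ℝ (⊤ : ℕ∞) (Function.uncurry F)) :
    Function.uncurry (pderivAff i F) = dirD (0, Pi.single i 1) (Function.uncurry F) := by
  ext ⟨l, a⟩
  have h := ((smooth_diff hF (l, a)).hasFDerivAt).comp a (hasFDerivAt_prodMk_right l a)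
  have h2 : fderiv ℝ (fun a' => F l a') a = _ := h.fderiv
  simp [pderivAff, dirD, h2]

theorem Dmix_llA {χ : ℕ} (i : Fin χ) {F : (Fin χ → ℝ) → (Fin χ → ℝ) → ℝ}
    (hF : ContDiff ℝ (⊤ : ℕ∞) (Function.uncurry F)) :
    Dmix [i, i] [i] F = dirD (Pi.single i 1, 0) (dirD (Pi.single i 1, 0)
      (dirD (0, Pi.single i 1) (Function.uncurry F))) 0 := by
  have h1 := uncurry_pderivAff i hF
  have s1 := h1 ▸ dirD_smooth (0, Pi.single i 1) hF
  have h2 := uncurry_pderivLam i s1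
  have s2 := h2 ▸ dirD_smooth (Pi.single i 1, 0) s1
  have h3 := uncurry_pderivLam i s2
  rw [← h1, ← h2, ← h3]
  rfl

theorem Dmix_lAA {χ : ℕ} (i : Fin χ) {F : (Fin χ → ℝ) → (Fin χ → ℝ) → ℝ}
    (hF : ContDiff ℝ (⊤ : ℕ∞) (Function.uncurry F)) :
    Dmix [i] [i, i] F = dirD (Pi.single i 1, 0) (dirD (0, Pi.single i 1)
      (dirD (0, Pi.single i 1) (Function.uncurry F))) 0 := by
  have h1 := uncurry_pderivAff i hF
  have s1 := h1 ▸ dirD_smooth (0, Pi.single i 1) hF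
  have h2 := uncurry_pderivAff i s1
  have s2 := h2 ▸ dirD_smooth (0, Pi.single i 1) s1
  have h3 := uncurry_pderivLam i s2
  rw [← h1, ← h2, ← h3]
  rfl

/-- `Q_{αα,α}(B) = Q_{α,αα}(−B) − 2 Q_{α,αα}(B)`. -/
theorem response_second_cumulant_same_indices {χ : ℕ} (hχ : 1 ≤ χ)
    (f g : (Fin χ → ℝ) → (Fin χ → ℝ) → ℝ)
    (hf : ContDiff ℝ (⊤ : ℕ∞) (Function.uncurry f))
    (hg : ContDiff ℝ (⊤ : ℕ∞) (Function.uncurry g))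
    (hFR : ∀ l A : Fin χ → ℝ, f l A = g (A - l) A)
    (hfnorm : ∀ A : Fin χ → ℝ, f 0 A = 0)
    (hgnorm : ∀ A : Fin χ → ℝ, g 0 A = 0)
    (α : Fin χ) :
    Dmix [α, α] [α] f = Dmix [α] [α, α] g - 2 * Dmix [α] [α, α] f := by
  rw [Dmix_llA α hf, Dmix_lAA α hf, Dmix_lAA α hg]
  let V := Fin χ → ℝ
  let P1 : V × V →L[ℝ] V := ContinuousLinearMap.fst ℝ V V
  let P2 : V × V →L[ℝ] V := ContinuousLinearMap.snd ℝ V V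
  let L : V × V →L[ℝ] V × V := (P2 - P1).prod P2
  let M : V × V →L[ℝ] V × V := P2.prod P2
  let N : V × V →L[ℝ] V × V := (0 : V × V →L[ℝ] V).prod P2
  have hL : Function.uncurry f = Function.uncurry g ∘ L := by
    ext ⟨l, a⟩; exact hFR l a
  have hM : Function.uncurry g ∘ M = 0 := by
    ext ⟨l, a⟩
    have h := hFR 0 a
    rw [hfnorm, sub_zero] at h
    exact h.symm
  have hN : Function.uncurry g ∘ N = 0 := by
    ext ⟨l, a⟩; exact hgnorm a
  set u : V × V := (Pi.single α 1, 0) with hu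
  set v : V × V := (0, Pi.single α 1) with hv
  have Lu : L u = -u := by simp [L, P1, P2, hu]
  have Lv : L v = u + v := by simp [L, P1, P2, hu, hv]
  have Mv : M v = u + v := by simp [M, P2, hu, hv]
  have Nv : N v = v := by simp [N, P2, hv]
  rw [hL]
  have eM := congrFun (dirD_comp3 M v v v hg) 0
  have eN := congrFun (dirD_comp3 N v v v hg) 0
  rw [dirD_comp3 L u u v hg, dirD_comp3 L u v v hg]
  rw [hM] at eM
  rw [hN] at eN
  generalize Function.uncurry g = G at *
  simp only [Lu, Lv, Mv, Nv, dirD_zero, Function.comp_apply, map_zero, Pi.zero_apply] at eM eN ⊢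
  exact final_algebra u v hg eM eN
end

section
/- For all α, β, γ, δ : Fin χ, the first responses of the third cumulants obey the symmetry D[(α, β, γ); (δ)] f + D[(α, β, γ); (δ)] g = D[(α, β, δ); (γ)] f + D[(α, β, δ); (γ)] g; that is, Q_{αβγ,δ}(B) + Q_{αβγ,δ}(−B) = Q_{αβδ,γ}(B) + Q_{αβδ,γ}(−B). -/
/-- Joint smoothness. -/
def SmoothTwo {χ : ℕ} (F : (Fin χ → ℝ) → (Fin χ → ℝ) → ℝ) : Prop :=
  ContDiff ℝ (⊤ : ℕ∞) (Function.uncurry F)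

/-- The substitution `λ ↦ A - λ`. -/
def reflTwo {χ : ℕ} (F : (Fin χ → ℝ) → (Fin χ → ℝ) → ℝ) :
    (Fin χ → ℝ) → (Fin χ → ℝ) → ℝ := fun l a => F (a - l) a

theorem SmoothTwo.hasFDerivAt {χ : ℕ} {F : (Fin χ → ℝ) → (Fin χ → ℝ) → ℝ} (h : SmoothTwo F)
    (p : (Fin χ → ℝ) × (Fin χ → ℝ)) :
    HasFDerivAt (Function.uncurry F) (fderiv ℝ (Function.uncurry F) p) p :=
  ((ContDiff.differentiable h (by simp)) p).hasFDerivAt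

theorem pderivLam_eq {χ : ℕ} {F : (Fin χ → ℝ) → (Fin χ → ℝ) → ℝ} (h : SmoothTwo F)
    (i : Fin χ) (l a : Fin χ → ℝ) :
    pderivLam i F l a = fderiv ℝ (Function.uncurry F) (l, a) (Pi.single i 1, 0) := by
  have h1 : HasFDerivAt (fun l' : Fin χ → ℝ => (l', a)) _ l :=
    (hasFDerivAt_id (𝕜 := ℝ) l).prodMk (hasFDerivAt_const a l)
  have h2 := (h.hasFDerivAt (l, a)).comp l h1
  have h3 : fderiv ℝ (fun l' => F l' a) l = _ := h2.fderiv
  unfold pderivLam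
  rw [h3]
  simp

theorem pderivAff_eq {χ : ℕ} {F : (Fin χ → ℝ) → (Fin χ → ℝ) → ℝ} (h : SmoothTwo F)
    (i : Fin χ) (l a : Fin χ → ℝ) :
    pderivAff i F l a = fderiv ℝ (Function.uncurry F) (l, a) (0, Pi.single i 1) := by
  have h1 : HasFDerivAt (fun a' : Fin χ → ℝ => (l, a')) _ a :=
    (hasFDerivAt_const (𝕜 := ℝ) l a).prodMk (hasFDerivAt_id a)
  have h2 := (h.hasFDerivAt (l, a)).comp a h1
  have h3 : fderiv ℝ (fun a' => F l a') a = _ := h2.fderiv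
  unfold pderivAff
  rw [h3]
  simp

theorem SmoothTwo.dir {χ : ℕ} {F : (Fin χ → ℝ) → (Fin χ → ℝ) → ℝ} (h : SmoothTwo F)
    (v : (Fin χ → ℝ) × (Fin χ → ℝ)) :
    ContDiff ℝ (⊤ : ℕ∞) (fun p => fderiv ℝ (Function.uncurry F) p v) :=
  (ContDiff.fderiv_right (m := (⊤ : ℕ∞)) h (by simp)).clm_apply contDiff_const

theorem uncurry_pderivLam_s9 {χ : ℕ} {F : (Fin χ → ℝ) → (Fin χ → ℝ) → ℝ} (h : SmoothTwo F)
    (i : Fin χ) : Function.uncurry (pderivLam i F) =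
      fun p => fderiv ℝ (Function.uncurry F) p (Pi.single i 1, 0) := by
  funext p
  exact pderivLam_eq h i p.1 p.2

theorem SmoothTwo.lam {χ : ℕ} {F : (Fin χ → ℝ) → (Fin χ → ℝ) → ℝ} (h : SmoothTwo F)
    (i : Fin χ) : SmoothTwo (pderivLam i F) := by
  unfold SmoothTwo
  rw [uncurry_pderivLam_s9 h]
  exact h.dir _

theorem SmoothTwo.aff {χ : ℕ} {F : (Fin χ → ℝ) → (Fin χ → ℝ) → ℝ} (h : SmoothTwo F)
    (i : Fin χ) : SmoothTwo (pderivAff i F) := by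
  have : Function.uncurry (pderivAff i F) =
      fun p => fderiv ℝ (Function.uncurry F) p (0, Pi.single i 1) := by
    funext p
    exact pderivAff_eq h i p.1 p.2
  unfold SmoothTwo
  rw [this]
  exact h.dir _

theorem SmoothTwo.add {χ : ℕ} {F G : (Fin χ → ℝ) → (Fin χ → ℝ) → ℝ} (h : SmoothTwo F)
    (h' : SmoothTwo G) : SmoothTwo (F + G) :=
  ContDiff.add h h'

theorem SmoothTwo.refl {χ : ℕ} {F : (Fin χ → ℝ) → (Fin χ → ℝ) → ℝ} (h : SmoothTwo F) :
    SmoothTwo (reflTwo F) :=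
  ContDiff.comp (g := Function.uncurry F)
    (f := fun p : (Fin χ → ℝ) × (Fin χ → ℝ) => (p.2 - p.1, p.2)) h
    ((contDiff_snd.sub contDiff_fst).prodMk contDiff_snd)

theorem pderivLam_add {χ : ℕ} {F G : (Fin χ → ℝ) → (Fin χ → ℝ) → ℝ} (h : SmoothTwo F)
    (h' : SmoothTwo G) (i : Fin χ) :
    pderivLam i (F + G) = pderivLam i F + pderivLam i G := by
  funext l a
  rw [pderivLam_eq (h.add h'), Pi.add_apply, Pi.add_apply, pderivLam_eq h, pderivLam_eq h']
  have : fderiv ℝ (Function.uncurry (F + G)) (l, a) = _ :=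
    ((h.hasFDerivAt (l, a)).add (h'.hasFDerivAt (l, a))).fderiv
  rw [this]
  rfl

theorem pderivLam_neg {χ : ℕ} (F : (Fin χ → ℝ) → (Fin χ → ℝ) → ℝ) (i : Fin χ) :
    pderivLam i (-F) = -pderivLam i F := by
  funext l a
  have : fderiv ℝ (fun l' => -F l' a) l = _ := fderiv_fun_neg
  simp [pderivLam, this]

theorem fderiv_refl {χ : ℕ} {F : (Fin χ → ℝ) → (Fin χ → ℝ) → ℝ} (h : SmoothTwo F)
    (l a u v : Fin χ → ℝ) :
    fderiv ℝ (Function.uncurry (reflTwo F)) (l, a) (u, v) =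
      fderiv ℝ (Function.uncurry F) (a - l, a) (v - u, v) := by
  have h1 : HasFDerivAt (fun p : (Fin χ → ℝ) × (Fin χ → ℝ) => (p.2 - p.1, p.2)) _ (l, a) :=
    ((hasFDerivAt_snd (𝕜 := ℝ)).sub hasFDerivAt_fst).prodMk hasFDerivAt_snd
  have h2 := HasFDerivAt.comp (g := Function.uncurry F)
    (g' := fderiv ℝ (Function.uncurry F) (a - l, a)) (l, a) (h.hasFDerivAt (a - l, a)) h1
  have h3 : fderiv ℝ (Function.uncurry (reflTwo F)) (l, a) = _ := h2.fderiv
  rw [h3]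
  simp

theorem pderivLam_refl {χ : ℕ} {F : (Fin χ → ℝ) → (Fin χ → ℝ) → ℝ} (h : SmoothTwo F)
    (i : Fin χ) : pderivLam i (reflTwo F) = -reflTwo (pderivLam i F) := by
  funext l a
  rw [pderivLam_eq h.refl, fderiv_refl h]
  simp only [Pi.neg_apply, reflTwo]
  rw [pderivLam_eq h, ← map_neg]
  simp

theorem pderivAff_refl {χ : ℕ} {F : (Fin χ → ℝ) → (Fin χ → ℝ) → ℝ} (h : SmoothTwo F)
    (i : Fin χ) : pderivAff i (reflTwo F) = reflTwo (pderivLam i F + pderivAff i F) := by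
  funext l a
  rw [pderivAff_eq h.refl, fderiv_refl h]
  simp only [Pi.add_apply, reflTwo]
  rw [pderivLam_eq h, pderivAff_eq h, ← map_add]
  simp

theorem pderivLam_comm {χ : ℕ} {F : (Fin χ → ℝ) → (Fin χ → ℝ) → ℝ} (h : SmoothTwo F)
    (i j : Fin χ) : pderivLam i (pderivLam j F) = pderivLam j (pderivLam i F) := by
  funext l a
  rw [pderivLam_eq (h.lam j), pderivLam_eq (h.lam i), uncurry_pderivLam_s9 h, uncurry_pderivLam_s9 h]
  have hd : DifferentiableAt ℝ (fderiv ℝ (Function.uncurry F)) (l, a) :=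
    (ContDiff.fderiv_right (m := (⊤ : ℕ∞)) h (by simp)).differentiable (by simp) _
  have key : ∀ u v : (Fin χ → ℝ) × (Fin χ → ℝ),
      fderiv ℝ (fun p => fderiv ℝ (Function.uncurry F) p u) (l, a) v =
        fderiv ℝ (fderiv ℝ (Function.uncurry F)) (l, a) v u := by
    intro u v
    rw [fderiv_clm_apply hd (differentiableAt_const u)]
    simp
  rw [key, key]
  have hs : IsSymmSndFDerivAt ℝ (Function.uncurry F) (l, a) :=
    ContDiffAt.isSymmSndFDerivAt (ContDiff.contDiffAt h) (by
      simp only [minSmoothness_of_isRCLikeNormedField]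
      exact WithTop.coe_le_coe.2 (le_top : (2 : ℕ∞) ≤ ⊤))
  exact hs _ _

theorem Dmix_sum {χ : ℕ} (f g : (Fin χ → ℝ) → (Fin χ → ℝ) → ℝ) (hg : SmoothTwo g)
    (hFR : f = reflTwo g) (α β γ δ : Fin χ) :
    Dmix [α, β, γ] [δ] f + Dmix [α, β, γ] [δ] g =
      -pderivLam α (pderivLam β (pderivLam γ (pderivLam δ g))) 0 0 := by
  subst hFR
  have hL := hg.lam δ
  have hA := hg.aff δ
  simp only [Dmix, List.foldr]
  rw [pderivAff_refl hg, pderivLam_refl (hL.add hA), pderivLam_neg, pderivLam_neg,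
    pderivLam_refl ((hL.add hA).lam γ), pderivLam_neg,
    pderivLam_refl (((hL.add hA).lam γ).lam β), pderivLam_add hL hA,
    pderivLam_add (hL.lam γ) (hA.lam γ), pderivLam_add ((hL.lam γ).lam β) ((hA.lam γ).lam β)]
  simp [reflTwo]

/-- `Q_{αβγ,δ}(B) + Q_{αβγ,δ}(−B) = Q_{αβδ,γ}(B) + Q_{αβδ,γ}(−B)`. -/
theorem symmetry_responses_third_cumulants {χ : ℕ} (hχ : 1 ≤ χ)
    (f g : (Fin χ → ℝ) → (Fin χ → ℝ) → ℝ)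
    (hf : ContDiff ℝ (⊤ : ℕ∞) (Function.uncurry f))
    (hg : ContDiff ℝ (⊤ : ℕ∞) (Function.uncurry g))
    (hFR : ∀ l A : Fin χ → ℝ, f l A = g (A - l) A)
    (α β γ δ : Fin χ) :
    Dmix [α, β, γ] [δ] f + Dmix [α, β, γ] [δ] g =
      Dmix [α, β, δ] [γ] f + Dmix [α, β, δ] [γ] g := by
  have hR : f = reflTwo g := by
    funext l a
    exact hFR l a
  rw [Dmix_sum f g hg hR, Dmix_sum f g hg hR, pderivLam_comm hg γ δ]
end
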